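/- Assume m ≥ 3, ρ < 4π, ρ > 4π((1 + α_i) + (1 + α_j)) for every pair of indices 1 ≤ i < j ≤ 3, and ρ < 4π((1 + α_1) + (1 + α_2) + (1 + α_3)). Then Σ_{ρ,α}, endowed with the weak topology, is not contractible (it is a finite graph containing the closed loop formed by the three segments of probability measures joining δ_{p_1}, δ_{p_2}, δ_{p_3}). -/

import Mathlib

open MeasureTheory Metric
open scoped NNReal ENNReal BigOperators Classical

variable {X : Type*}

/-- The weighted cardinality function `χ` (for `p` injective). -/
noncomputable def chi {m : ℕ} (p : Fin m → X) (α : Fin m → ℝ) (q : X) : ℝ :=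
  1 + ∑ j, if p j = q then α j else 0

/-- The space of formal barycenters `Σ_{ρ,α}`, as a set of probability measures (endowed,
as a subspace of `ProbabilityMeasure X`, with the topology of weak convergence). -/
noncomputable def Bar [MetricSpace X] [MeasurableSpace X] {m : ℕ} (p : Fin m → X)
    (α : Fin m → ℝ) (ρ : ℝ) : Set (ProbabilityMeasure X) :=
  {μ | ∃ (J : Finset X) (t : X → ℝ≥0),
    (∑ q ∈ J, t q) = 1 ∧
    4 * Real.pi * (∑ q ∈ J, chi p α q) < ρ ∧
    (μ : Measure X) = ∑ q ∈ J, ((t q : ℝ≥0∞) • Measure.dirac q)}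

open unitInterval Topology

lemma aux_circle {Y : Type*} [TopologicalSpace Y] [SimplyConnectedSpace Y] (x1 x2 : Y → ℝ)
    (h1 : Continuous x1) (h2 : Continuous x2)
    (h : ∀ y, x1 y * x2 y = 0 ∨ x1 y + x2 y = 1) {a b c : Y} (P : Path a b)
    (hP1 : ∀ t : I, x1 (P t) = 1 - (t : ℝ)) (hP2 : ∀ t : I, x2 (P t) = (t : ℝ))
    (Q1 : Path a c) (Q2 : Path c b)
    (hQ1 : ∀ t, x1 (Q1 t) * x2 (Q1 t) = 0) (hQ2 : ∀ t, x1 (Q2 t) * x2 (Q2 t) = 0) : False := by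
  let F : Y → AddCircle (1 : ℝ) := fun y => if x1 y * x2 y = 0 then 0 else ((x1 y : ℝ) : AddCircle (1 : ℝ))
  have hone : ((1 : ℝ) : AddCircle (1 : ℝ)) = 0 := AddCircle.coe_period 1
  have hFB : ∀ y, x1 y * x2 y = 0 → F y = 0 := fun y hy => if_pos hy
  have hFA : ∀ y, x1 y + x2 y = 1 → F y = ((x1 y : ℝ) : AddCircle (1 : ℝ)) := by
    intro y hy
    by_cases h0 : x1 y * x2 y = 0
    · rw [hFB y h0]
      rcases mul_eq_zero.1 h0 with h' | h'
      · rw [h']; simp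
      · have : x1 y = 1 := by linarith
        rw [this, hone]
    · exact if_neg h0
  have hF : Continuous F := by
    have hA : ContinuousOn F {y | x1 y + x2 y = 1} := by
      refine ContinuousOn.congr (f := fun y => ((x1 y : ℝ) : AddCircle (1 : ℝ))) ?_ hFA
      exact ((AddCircle.continuous_mk' (1 : ℝ)).comp h1).continuousOn
    have hB : ContinuousOn F {y | x1 y * x2 y = 0} :=
      ContinuousOn.congr (f := fun y => 0) continuousOn_const hFB
    have := hB.union_of_isClosed hA (isClosed_eq (h1.mul h2) continuous_const)
      (isClosed_eq (h1.add h2) continuous_const)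
    rw [← continuousOn_univ]
    convert this
    symm
    exact Set.eq_univ_of_forall h
  have cov := AddCircle.isCoveringMap_coe (1 : ℝ)
  have hhom := SimplyConnectedSpace.paths_homotopic P (Q1.trans Q2)
  have hF0 : F a = ((1 : ℝ) : AddCircle (1 : ℝ)) := by
    rw [hone]
    apply hFB
    simpa using hQ1 0
  have key := cov.liftPath_apply_one_eq_of_homotopicRel
      (ContinuousMap.HomotopicRel.comp_continuousMap hhom ⟨F, hF⟩) 1 (by simp [hF0]) (by simp [hF0])
  have e1 := (cov.eq_liftPath_iff' (γ := (ContinuousMap.comp ⟨F, hF⟩ (P : C(I, Y)))) (e := 1)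
    (by simp [hF0])
    (Γ := ⟨fun t => 1 - (t : ℝ), by fun_prop⟩)).2 ⟨by
      funext t
      simp only [Function.comp_apply, ContinuousMap.coe_mk, ContinuousMap.comp_apply]
      refine ((hFA _ ?_).trans ?_).symm
      · exact (congrArg₂ (· + ·) (hP1 t) (hP2 t)).trans (by ring)
      · exact congrArg _ (hP1 t), by simp⟩
  have e2 := (cov.eq_liftPath_iff' (γ := (ContinuousMap.comp ⟨F, hF⟩ ((Q1.trans Q2 : Path a b) : C(I, Y)))) (e := 1)
    (by simp [hF0])
    (Γ := ⟨fun t => 1, by fun_prop⟩)).2 ⟨by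
      funext t
      simp only [Function.comp_apply, ContinuousMap.coe_mk, ContinuousMap.comp_apply]
      rw [hone]
      symm
      apply hFB
      have : (Q1.trans Q2) t ∈ Set.range (Q1.trans Q2) := ⟨t, rfl⟩
      rw [Path.trans_range] at this
      rcases this with ⟨s, hs⟩ | ⟨s, hs⟩
      · have := hQ1 s
        rw [hs] at this; exact this
      · have := hQ2 s
        rw [hs] at this; exact this, by simp⟩
  have key' := (congrArg (fun Γ : C(I, ℝ) => Γ 1) e1).trans
    (key.trans (congrArg (fun Γ : C(I, ℝ) => Γ 1) e2).symm)
  simp at key'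

lemma aux_seg [MetricSpace X] [MeasurableSpace X] [BorelSpace X]
    {m : ℕ} (p : Fin m → X) (α : Fin m → ℝ) (ρ : ℝ) (a b : X) (hab : a ≠ b)
    (hchi : 4 * Real.pi * (chi p α a + chi p α b) < ρ)
    (ha : (⟨Measure.dirac a, inferInstance⟩ : ProbabilityMeasure X) ∈ Bar p α ρ)
    (hb : (⟨Measure.dirac b, inferInstance⟩ : ProbabilityMeasure X) ∈ Bar p α ρ) :
    ∃ P : Path (⟨_, ha⟩ : Bar p α ρ) ⟨_, hb⟩, ∀ (t : I) (f : X → ℝ), Continuous f →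
      ∫ x, f x ∂((P t : ProbabilityMeasure X) : Measure X) = (1 - (t : ℝ)) * f a + t * f b := by
  let M : I → Measure X := fun t => ENNReal.ofReal (1 - (t : ℝ)) • Measure.dirac a +
    ENNReal.ofReal (t : ℝ) • Measure.dirac b
  have hM : ∀ t, IsProbabilityMeasure (M t) := by
    intro t
    constructor
    simp only [M, Measure.add_apply, Measure.smul_apply, measure_univ, smul_eq_mul, mul_one]
    rw [← ENNReal.ofReal_add (by linarith [t.2.2]) t.2.1]
    simp
  have hI : ∀ (t : I) (f : X → ℝ), Continuous f →
      ∫ x, f x ∂(M t) = (1 - (t : ℝ)) * f a + t * f b := by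
    intro t f hf
    have hd : ∀ c, Integrable f (Measure.dirac c) := fun c =>
      integrable_dirac' hf.stronglyMeasurable (by simp)
    simp only [M]
    rw [integral_add_measure ((hd a).smul_measure (by simp)) ((hd b).smul_measure (by simp)),
      integral_smul_measure, integral_smul_measure,
      integral_dirac' _ _ hf.stronglyMeasurable, integral_dirac' _ _ hf.stronglyMeasurable,
      ENNReal.toReal_ofReal (by linarith [t.2.2]), ENNReal.toReal_ofReal t.2.1]
    simp
  have hB : ∀ t, (⟨M t, hM t⟩ : ProbabilityMeasure X) ∈ Bar p α ρ := by
    intro t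
    refine ⟨{a, b}, fun q => if q = a then Real.toNNReal (1 - (t : ℝ)) else Real.toNNReal t, ?_, ?_, ?_⟩
    · rw [Finset.sum_pair hab, if_pos rfl, if_neg hab.symm,
        ← Real.toNNReal_add (by linarith [t.2.2]) t.2.1]
      simp
    · rw [Finset.sum_pair hab]; exact hchi
    · rw [Finset.sum_pair hab]
      change M t = _
      simp only [if_true, if_neg hab.symm]
      rfl
  refine ⟨⟨⟨fun t => ⟨⟨M t, hM t⟩, hB t⟩, ?_⟩, ?_, ?_⟩, ?_⟩
  · refine Continuous.subtype_mk ?_ _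
    refine continuous_iff_continuousAt.2 ?_
    intro t
    refine ProbabilityMeasure.tendsto_iff_forall_integral_tendsto.2 fun f => ?_
    have : Continuous fun t : I => (1 - (t : ℝ)) * f a + t * f b := by fun_prop
    refine (this.tendsto t).congr' ?_ |>.trans_eq ?_
    · exact Filter.Eventually.of_forall fun s => (hI s f f.continuous).symm
    · exact congrArg _ (hI t f f.continuous).symm
  · refine Subtype.ext (Subtype.ext ?_)
    simp [M]
  · refine Subtype.ext (Subtype.ext ?_)
    simp [M]
  · intro t f hf
    exact hI t f hf

lemma chi_p {m : ℕ} (p : Fin m → X) (hp : Function.Injective p) (α : Fin m → ℝ) (i : Fin m) :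
    chi p α (p i) = 1 + α i := by
  simp [chi, hp.eq_iff]

lemma chi_not {m : ℕ} (p : Fin m → X) (α : Fin m → ℝ) (q : X)
    (hq : ∀ i, p i ≠ q) : chi p α q = 1 := by
  simp [chi, hq]

theorem barycenters_loop_not_contractible
    [MetricSpace X] [CompactSpace X] [Infinite X] [MeasurableSpace X] [BorelSpace X]
    {m : ℕ} (hm : 3 ≤ m) (p : Fin m → X) (hp : Function.Injective p)
    (α : Fin m → ℝ) (hα : ∀ j, -1 < α j ∧ α j < 0) (hmono : Monotone α)
    (ρ : ℝ) (hρ : 0 < ρ)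
    (hρ4 : ρ < 4 * Real.pi)
    (hpair : ∀ i j : Fin m, (i : ℕ) < (j : ℕ) → (j : ℕ) < 3 →
      4 * Real.pi * ((1 + α i) + (1 + α j)) < ρ)
    (htriple : ρ < 4 * Real.pi * ∑ i ∈ Finset.univ.filter (fun i : Fin m => (i : ℕ) < 3),
      (1 + α i)) :
    ¬ ContractibleSpace ↥(Bar p α ρ) := by
  intro hcon
  have hpi := Real.pi_pos
  let i0 : Fin m := ⟨0, by omega⟩
  let i1 : Fin m := ⟨1, by omega⟩
  let i2 : Fin m := ⟨2, by omega⟩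
  have h01 : i0 ≠ i1 := by simp [i0, i1]
  have h02 : i0 ≠ i2 := by simp [i0, i2]
  have h12 : i1 ≠ i2 := by simp [i1, i2]
  have hfil : Finset.univ.filter (fun i : Fin m => (i : ℕ) < 3) = {i0, i1, i2} := by
    ext i
    simp only [Finset.mem_filter, Finset.mem_univ, true_and, Finset.mem_insert,
      Finset.mem_singleton, Fin.ext_iff, i0, i1, i2]
    omega
  rw [hfil, Finset.sum_insert (by simp [h01, h02]), Finset.sum_pair h12] at htriple
  have hchip := chi_p p hp α
  have hchipos : ∀ q, 0 < chi p α q := by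
    intro q
    by_cases hq : ∃ i, p i = q
    · obtain ⟨i, rfl⟩ := hq
      rw [hchip]; linarith [(hα i).1]
    · push Not at hq
      rw [chi_not p α q hq]; norm_num
  -- supports lie in the range of `p`
  have hJ : ∀ J : Finset X, 4 * Real.pi * (∑ q ∈ J, chi p α q) < ρ → ∀ q ∈ J, ∃ i, p i = q := by
    intro J hJ q hq
    by_contra hq'
    push Not at hq'
    have h1 := Finset.single_le_sum (f := chi p α) (fun x _ => (hchipos x).le) hq
    rw [chi_not p α q hq'] at h1
    nlinarith
  have hJ2 : ∀ J : Finset X, 4 * Real.pi * (∑ q ∈ J, chi p α q) < ρ → p i0 ∈ J → p i1 ∈ J →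
      J = {p i0, p i1} := by
    intro J hs h0 h1
    refine Finset.Subset.antisymm ?_ (by
      intro x hx
      simp only [Finset.mem_insert, Finset.mem_singleton] at hx
      rcases hx with rfl | rfl <;> assumption)
    intro q hq
    by_contra hq'
    obtain ⟨k, rfl⟩ := hJ J hs q hq
    simp only [Finset.mem_insert, Finset.mem_singleton, hp.eq_iff, not_or] at hq'
    have hk : i2 ≤ k := by
      have a1 := hq'.1
      have a2 := hq'.2
      simp only [Fin.ext_iff, i0, i1, i2, Fin.le_def] at *
      omega
    have hle : ∑ q ∈ {p i0, p i1, p k}, chi p α q ≤ ∑ q ∈ J, chi p α q := by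
      apply Finset.sum_le_sum_of_subset_of_nonneg
      · intro x hx
        simp only [Finset.mem_insert, Finset.mem_singleton] at hx
        rcases hx with rfl | rfl | rfl <;> assumption
      · intro x _ _
        exact (hchipos x).le
    rw [Finset.sum_insert (by simp [hp.eq_iff, h01, Ne.symm hq'.1]),
      Finset.sum_pair (by simpa [hp.eq_iff] using Ne.symm hq'.2), hchip, hchip, hchip] at hle
    have := hmono hk
    have h3 : (1 + α i0) + ((1 + α i1) + (1 + α i2)) ≤ ∑ q ∈ J, chi p α q := by linarith
    nlinarith
  -- coordinate functions
  have hf : ∀ i : Fin m, ∃ f : C(X, ℝ), f (p i) = 1 ∧ ∀ j, j ≠ i → f (p j) = 0 := by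
    intro i
    obtain ⟨f, hf0, hf1, -⟩ := exists_continuous_zero_one_of_isClosed
      (s := p '' {j | j ≠ i}) (t := {p i}) (Set.toFinite _).isClosed isClosed_singleton (by
        rw [Set.disjoint_singleton_right]
        rintro ⟨j, hj, h⟩
        exact hj (hp h))
    exact ⟨f, hf1 rfl, fun j hj => hf0 ⟨j, hj, rfl⟩⟩
  obtain ⟨f, hf1, hf0⟩ := hf i0
  obtain ⟨g, hg1, hg0⟩ := hf i1
  have hcont : ∀ f : C(X, ℝ), Continuous fun μ : Bar p α ρ =>
      ∫ x, f x ∂((μ : ProbabilityMeasure X) : Measure X) := fun f =>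
    (ProbabilityMeasure.continuous_integral_boundedContinuousFunction
      (BoundedContinuousFunction.mkOfCompact f)).comp continuous_subtype_val
  have hmem : ∀ i : Fin m, (i : ℕ) < 3 → (⟨Measure.dirac (p i), inferInstance⟩ : ProbabilityMeasure X) ∈ Bar p α ρ := by
    intro i hi
    refine ⟨{p i}, fun _ => 1, by simp, ?_, by simp⟩
    rw [Finset.sum_singleton, hchip]
    by_cases h : i = i0
    · have := hpair i0 i1 (by simp [i0, i1]) (by simp [i1])
      have h1 := (hα i1).1
      rw [h]
      nlinarith
    · have := hpair i0 i (by simp [i0, Fin.ext_iff] at *; omega) hi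
      have h1 := (hα i0).1
      nlinarith
  have m0 := hmem i0 (by simp [i0])
  have m1 := hmem i1 (by simp [i1])
  have m2 := hmem i2 (by simp [i2])
  obtain ⟨P, hP⟩ := aux_seg p α ρ (p i0) (p i1) (hp.ne h01)
    (by rw [hchip, hchip]; exact hpair _ _ (by simp [i0, i1]) (by simp [i1])) m0 m1
  obtain ⟨Q1, hQ1⟩ := aux_seg p α ρ (p i0) (p i2) (hp.ne h02)
    (by rw [hchip, hchip]; exact hpair _ _ (by simp [i0, i2]) (by simp [i2])) m0 m2
  obtain ⟨Q2, hQ2⟩ := aux_seg p α ρ (p i2) (p i1) (hp.ne h12.symm)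
    (by rw [hchip, hchip, add_comm (1 + α i2)]
        exact hpair _ _ (by simp [i1, i2]) (by simp [i2])) m2 m1
  refine aux_circle _ _ (hcont f) (hcont g) ?_ P ?_ ?_ Q1 Q2 ?_ ?_
  · rintro ⟨μ, J, t, ht, hs, hμ⟩
    have hint : ∀ f : C(X, ℝ), ∫ x, f x ∂(μ : Measure X) = ∑ q ∈ J, (t q : ℝ) * f q := by
      intro f
      have hd : ∀ c, Integrable f (Measure.dirac c) := fun c =>
        integrable_dirac' f.continuous.stronglyMeasurable (by simp)
      rw [hμ, integral_finsetSum_measure (fun q _ => (hd q).smul_measure (by simp))]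
      refine Finset.sum_congr rfl fun q _ => ?_
      rw [integral_smul_measure, integral_dirac' _ _ f.continuous.stronglyMeasurable]
      simp
    have hz : ∀ (f : C(X, ℝ)) (i : Fin m), (∀ j, j ≠ i → f (p j) = 0) → p i ∉ J →
        ∫ x, f x ∂(μ : Measure X) = 0 := by
      intro f i hf hi
      rw [hint]
      refine Finset.sum_eq_zero fun q hq => ?_
      obtain ⟨k, rfl⟩ := hJ J hs q hq
      rw [hf k (by rintro rfl; exact hi hq), mul_zero]
    by_cases h0 : p i0 ∈ J
    · by_cases h1 : p i1 ∈ J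
      · right
        have hJe := hJ2 J hs h0 h1
        have ht' := congrArg (fun x : ℝ≥0 => (x : ℝ)) ht
        simp only [hint]
        rw [hJe, Finset.sum_pair (hp.ne h01)] at ht' ⊢
        rw [Finset.sum_pair (hp.ne h01), hf1, hg1, hf0 i1 h01.symm, hg0 i0 h01]
        simp at ht' ⊢
        linarith
      · left
        exact mul_eq_zero_of_right _ (hz g i1 hg0 h1)
    · left
      exact mul_eq_zero_of_left (hz f i0 hf0 h0) _
  · intro t
    rw [hP t f f.continuous, hf1, hf0 i1 h01.symm]; ring
  · intro t
    rw [hP t g g.continuous, hg1, hg0 i0 h01]; ring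
  · intro t
    rw [hQ1 t g g.continuous, hg0 i0 h01, hg0 i2 h12.symm]; ring
  · intro t
    rw [hQ2 t f f.continuous, hf0 i1 h01.symm, hf0 i2 h02.symm]; ring
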